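/- arXiv:1503.05444 — 3 statements merged into one kernel-verified Lean document; each statement's English description precedes it below -/
import Mathlib

section
/- For all nonnegative integers n, m and all x ∈ ℂ, φ_{n+m}(x) = Σ_{k=0}^{n} Σ_{j=0}^{m} C(n,k) · S(m,j) · j^{n−k} · x^j · φ_k(x). -/
open Finset

/-- Stirling numbers of the second kind. -/
def stirling2 : ℕ → ℕ → ℕ
  | 0, 0 => 1
  | 0, _ + 1 => 0
  | _ + 1, 0 => 0
  | n + 1, k + 1 => (k + 1) * stirling2 n (k + 1) + stirling2 n k

/-- The exponential polynomials φₙ(x) = Σ_{k=0}^{n} S(n,k) xᵏ. -/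
noncomputable def expPoly (n : ℕ) (x : ℂ) : ℂ :=
  ∑ k ∈ Finset.range (n + 1), (stirling2 n k : ℂ) * x ^ k

/-!
The operator `θ p = X * (p + p')`, which is `x d/dx` conjugated by `exp x`, raises the index of the
exponential polynomials: `θ φₙ = φₙ₊₁`. Since `θ X = X (θ + 1)`, it also satisfies
`θⁿ Xʲ = Xʲ (θ + j)ⁿ`, where the right-hand side expands by the binomial theorem. Applying this to
the constant `1`, with `φₘ = ∑ S(m, j) Xʲ` and `φₖ = θᵏ 1`, expresses `φₙ₊ₘ = θⁿ φₘ` through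
the `φₖ`.
-/

section Semiconj

variable {A : Type*} [Semiring A] {a t : A}

theorem semiconjBy_pow_add_natCast (h : SemiconjBy a (t + 1) t) (j : ℕ) :
    SemiconjBy (a ^ j) (t + j) t := by
  induction j with
  | zero => simp
  | succ j ih =>
    have shifted : SemiconjBy a (t + 1 + j) (t + j) := h.add_right (Nat.cast_commute j a).symm
    rw [pow_succ, Nat.cast_succ, add_comm (j : A), ← add_assoc]
    exact ih.mul_left shifted

theorem pow_mul_pow_of_semiconjBy (h : SemiconjBy a (t + 1) t) (n j : ℕ) :
    t ^ n * a ^ j = ∑ k ∈ range (n + 1), (n.choose k * j ^ (n - k)) • (a ^ j * t ^ k) :=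
  calc t ^ n * a ^ j
      = a ^ j * (t + j) ^ n := ((semiconjBy_pow_add_natCast h j).pow_right n).symm
    _ = ∑ k ∈ range (n + 1), (n.choose k * j ^ (n - k)) • (a ^ j * t ^ k) := by
      rw [(Nat.cast_commute j t).symm.add_pow, mul_sum]
      refine sum_congr rfl fun k _ => ?_
      rw [mul_assoc (t ^ k), ← Nat.cast_pow, ← Nat.cast_mul, ← nsmul_eq_mul', mul_smul_comm,
        mul_comm (n.choose k)]

end Semiconj

section Touchard

open Polynomial

/-- The `n`-th exponential (Touchard) polynomial as a formal polynomial. Its coefficients are taken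
in `ℕ`, so that it can be evaluated in every semiring. -/
noncomputable def touchard (n : ℕ) : ℕ[X] :=
  ∑ k ∈ range (n + 1), n.stirlingSecond k • X ^ k

/-- The raising operator `p ↦ X * (p + p')` of the exponential polynomials. -/
noncomputable def touchardRaise : Module.End ℕ ℕ[X] :=
  LinearMap.mulLeft ℕ X * (1 + derivative)

theorem touchardRaise_apply (p : ℕ[X]) : touchardRaise p = X * (p + derivative p) := rfl

theorem semiconjBy_mulLeft_X_touchardRaise :
    SemiconjBy (LinearMap.mulLeft ℕ (X : ℕ[X])) (touchardRaise + 1) touchardRaise := by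
  refine LinearMap.ext fun p => ?_
  simp only [Module.End.mul_apply, LinearMap.add_apply, Module.End.one_apply,
    LinearMap.mulLeft_apply, touchardRaise_apply, derivative_mul, derivative_X]
  ring

theorem coeff_touchard (n k : ℕ) : (touchard n).coeff k = n.stirlingSecond k := by
  simp only [touchard, finsetSum_coeff, coeff_smul, coeff_X_pow, smul_eq_mul, mul_ite, mul_one,
    mul_zero, sum_ite_eq, mem_range]
  exact ite_eq_left_iff.2 fun h => (Nat.stirlingSecond_eq_zero_of_lt (by omega)).symm

theorem touchard_zero : touchard 0 = 1 := by
  simp [touchard]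

theorem touchardRaise_touchard (n : ℕ) : touchardRaise (touchard n) = touchard (n + 1) := by
  ext (_ | k)
  · simp [touchardRaise_apply, coeff_touchard]
  · rw [touchardRaise_apply, coeff_X_mul, coeff_add, coeff_derivative]
    simp only [coeff_touchard, Nat.stirlingSecond_succ_succ, Nat.cast_id]
    ring

theorem touchardRaise_pow_touchard (n m : ℕ) :
    (touchardRaise ^ n) (touchard m) = touchard (n + m) := by
  induction n with
  | zero => simp
  | succ n ih =>
    rw [pow_succ', Module.End.mul_apply, ih, touchardRaise_touchard, Nat.add_right_comm]

theorem touchardRaise_pow_one (n : ℕ) : (touchardRaise ^ n) 1 = touchard n := by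
  rw [← touchard_zero, touchardRaise_pow_touchard, add_zero]

theorem touchardRaise_pow_X_pow (n j : ℕ) :
    (touchardRaise ^ n) (X ^ j) =
      ∑ k ∈ range (n + 1), (n.choose k * j ^ (n - k)) • (X ^ j * touchard k) := by
  have h :=
    LinearMap.congr_fun (pow_mul_pow_of_semiconjBy semiconjBy_mulLeft_X_touchardRaise n j) 1
  simpa only [LinearMap.pow_mulLeft, Module.End.mul_apply, LinearMap.mulLeft_apply, mul_one,
    LinearMap.sum_apply, LinearMap.smul_apply, touchardRaise_pow_one] using h

theorem touchard_add (n m : ℕ) :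
    touchard (n + m) = ∑ k ∈ range (n + 1), ∑ j ∈ range (m + 1),
      (n.choose k * m.stirlingSecond j * j ^ (n - k)) • (X ^ j * touchard k) := by
  rw [← touchardRaise_pow_touchard, touchard, map_sum, sum_comm]
  refine sum_congr rfl fun j _ => ?_
  rw [map_nsmul, touchardRaise_pow_X_pow, smul_sum]
  refine sum_congr rfl fun k _ => ?_
  rw [smul_smul, mul_left_comm, mul_assoc]

theorem stirling2_eq_stirlingSecond : ∀ n k : ℕ, stirling2 n k = n.stirlingSecond k
  | 0, 0 => rfl
  | 0, _ + 1 => rfl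
  | _ + 1, 0 => rfl
  | n + 1, k + 1 => by
    rw [stirling2, Nat.stirlingSecond_succ_succ, stirling2_eq_stirlingSecond n (k + 1),
      stirling2_eq_stirlingSecond n k]

theorem aeval_touchard_eq_expPoly (n : ℕ) (x : ℂ) : aeval x (touchard n) = expPoly n x := by
  simp [touchard, expPoly, stirling2_eq_stirlingSecond]

theorem stmt1_general {R : Type*} [Semiring R] (n m : ℕ) (x : R) :
    aeval x (touchard (n + m)) =
      ∑ k ∈ range (n + 1), ∑ j ∈ range (m + 1),
        (n.choose k : R) * (m.stirlingSecond j : R) * (j : R) ^ (n - k) * x ^ j *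
          aeval x (touchard k) := by
  simp [touchard_add n m, mul_assoc]

end Touchard

theorem stmt1 (n m : ℕ) (x : ℂ) :
    expPoly (n + m) x =
      ∑ k ∈ range (n + 1), ∑ j ∈ range (m + 1),
        (n.choose k : ℂ) * (stirling2 m j : ℂ) * (j : ℂ) ^ (n - k) * x ^ j * expPoly k x := by
  simpa only [aeval_touchard_eq_expPoly, ← stirling2_eq_stirlingSecond] using stmt1_general n m x
end

section
/- Let g be a polynomial with complex coefficients, and define the operator M̂g(x) = x·g(x) + x·g′(x). Then for all x, t ∈ ℂ, the series Σ_{n=0}^{∞} (M̂ⁿ g)(x) · tⁿ/n! converges absolutely and equals e^{x(e^t−1)} · g(x e^t). -/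
/-- The operator M̂g(x) = x·g(x) + x·g′(x) on polynomials. -/
noncomputable def Mhat (p : Polynomial ℂ) : Polynomial ℂ :=
  Polynomial.X * p + Polynomial.X * Polynomial.derivative p

/-!
The flow `F_g(t) = e^{x(e^t - 1)} g(x e^t)` satisfies `F_g′ = F_{M̂g}` and `F_g(0) = g(x)`. Hence
the `n`-th derivative of `F_g` at `0` is `(M̂ⁿg)(x)`, and the series `Σ (M̂ⁿg)(x) tⁿ/n!` is the
Taylor series at `0` of the entire function `F_g`. All of this takes place in the space of
entire functions `g`, which `M̂` preserves.
-/

open scoped Nat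

theorem iteratedDeriv_eq_iterate_of_hasDerivAt {α 𝕜 F : Type*} [NontriviallyNormedField 𝕜]
    [NormedAddCommGroup F] [NormedSpace 𝕜 F] {T : α → α} {s : Set α} {Φ : α → 𝕜 → F}
    (hT : Set.MapsTo T s s) (hΦ : ∀ a ∈ s, ∀ t, HasDerivAt (Φ a) (Φ (T a) t) t)
    {a : α} (ha : a ∈ s) (n : ℕ) : iteratedDeriv n (Φ a) = Φ (T^[n] a) := by
  induction n generalizing a with
  | zero => rw [iteratedDeriv_zero, Function.iterate_zero_apply]
  | succ n ih =>
    have hderiv : deriv (Φ a) = Φ (T a) := funext fun t => (hΦ a ha t).deriv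
    rw [iteratedDeriv_succ', hderiv, ih (hT ha), Function.iterate_succ_apply]

section Entire

variable {E : Type*} [NormedAddCommGroup E] [NormedSpace ℂ E]

theorem summable_norm_taylorSeries_of_entire [CompleteSpace E] {f : ℂ → E}
    (hf : Differentiable ℂ f) (c z : ℂ) :
    Summable fun n : ℕ => ‖(n ! : ℂ)⁻¹ • (z - c) ^ n • iteratedDeriv n f c‖ := by
  have hseries := hf.hasFPowerSeriesOnBall c one_pos
  have hmem : z - c ∈ Metric.eball 0 (cauchyPowerSeries f c (1 : NNReal)).radius := by
    rw [top_le_iff.mp hseries.r_le]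
    exact Metric.mem_eball.mpr (edist_lt_top _ _)
  refine (FormalMultilinearSeries.summable_norm_apply _ hmem).congr fun n => ?_
  have hcoeff : (n ! : ℂ) • cauchyPowerSeries f c (1 : NNReal) n (fun _ => z - c) =
      (z - c) ^ n • iteratedDeriv n f c := by
    rw [Nat.cast_smul_eq_nsmul, hseries.factorial_smul,
      iteratedFDeriv_apply_eq_iteratedDeriv_mul_prod, Fin.prod_const]
  rw [← hcoeff, inv_smul_smul₀ (Nat.cast_ne_zero.mpr n.factorial_ne_zero)]

/-- The operator `M̂` acting on functions rather than polynomials. It is meant for differentiable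
`g`, since `deriv g` takes the value `0` where `g` is not differentiable. -/
noncomputable def mhatFun (g : ℂ → E) (x : ℂ) : E :=
  x • g x + x • deriv g x

/-- The closed form `e^{x(e^t - 1)} g(x e^t)` of the flow `e^{tM̂}` applied to `g`, at the
point `x`. -/
noncomputable def mhatFlow (x : ℂ) (g : ℂ → E) (t : ℂ) : E :=
  Complex.exp (x * (Complex.exp t - 1)) • g (x * Complex.exp t)

theorem mhatFlow_zero (x : ℂ) (g : ℂ → E) : mhatFlow x g 0 = g x := by
  simp [mhatFlow]

theorem hasDerivAt_mhatFlow {g : ℂ → E} {x t : ℂ}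
    (hg : DifferentiableAt ℂ g (x * Complex.exp t)) :
    HasDerivAt (mhatFlow x g) (mhatFlow x (mhatFun g) t) t := by
  have hexponent : HasDerivAt (fun t => x * (Complex.exp t - 1)) (x * Complex.exp t) t :=
    ((Complex.hasDerivAt_exp t).sub_const 1).const_mul x
  have hcomp : HasDerivAt (fun t => g (x * Complex.exp t))
      ((x * Complex.exp t) • deriv g (x * Complex.exp t)) t :=
    hg.hasDerivAt.scomp t ((Complex.hasDerivAt_exp t).const_mul x)
  refine (hexponent.cexp.smul hcomp).congr_deriv ?_
  simp only [mhatFlow, mhatFun]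
  module

theorem differentiable_mhatFlow {g : ℂ → E} (hg : Differentiable ℂ g) (x : ℂ) :
    Differentiable ℂ (mhatFlow x g) :=
  fun _ => (hasDerivAt_mhatFlow (hg _)).differentiableAt

theorem differentiable_mhatFun [CompleteSpace E] {g : ℂ → E} (hg : Differentiable ℂ g) :
    Differentiable ℂ (mhatFun g) :=
  (differentiable_id.smul hg).add (differentiable_id.smul hg.deriv)

theorem iteratedDeriv_mhatFlow [CompleteSpace E] {g : ℂ → E} (hg : Differentiable ℂ g)
    (x : ℂ) (n : ℕ) : iteratedDeriv n (mhatFlow x g) = mhatFlow x (mhatFun^[n] g) :=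
  iteratedDeriv_eq_iterate_of_hasDerivAt (s := {g | Differentiable ℂ g})
    (Φ := mhatFlow x) (fun _ => differentiable_mhatFun)
    (fun _ hg _ => hasDerivAt_mhatFlow (hg _)) hg n

theorem iteratedDeriv_mhatFlow_zero [CompleteSpace E] {g : ℂ → E} (hg : Differentiable ℂ g)
    (x : ℂ) (n : ℕ) : iteratedDeriv n (mhatFlow x g) 0 = mhatFun^[n] g x := by
  rw [iteratedDeriv_mhatFlow hg, mhatFlow_zero]

theorem stmt2_general [CompleteSpace E] {g : ℂ → E} (hg : Differentiable ℂ g) (x t : ℂ) :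
    Summable (fun n : ℕ => ‖(t ^ n / (n ! : ℂ)) • mhatFun^[n] g x‖) ∧
    HasSum (fun n : ℕ => (t ^ n / (n ! : ℂ)) • mhatFun^[n] g x)
      (Complex.exp (x * (Complex.exp t - 1)) • g (x * Complex.exp t)) := by
  have hflow := differentiable_mhatFlow hg x
  have hterm (n : ℕ) : (t ^ n / (n ! : ℂ)) • mhatFun^[n] g x =
      (n ! : ℂ)⁻¹ • (t - 0) ^ n • iteratedDeriv n (mhatFlow x g) 0 := by
    rw [iteratedDeriv_mhatFlow_zero hg, sub_zero, smul_smul, inv_mul_eq_div]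
  simp only [hterm]
  exact ⟨summable_norm_taylorSeries_of_entire hflow 0 t,
    Complex.hasSum_taylorSeries_of_entire hflow 0 t⟩

end Entire

theorem semiconj_eval_mhat :
    Function.Semiconj (fun (p : Polynomial ℂ) (x : ℂ) => p.eval x) Mhat mhatFun := by
  intro p
  funext x
  simp [Mhat, mhatFun]

theorem eval_iterate_mhat (p : Polynomial ℂ) (n : ℕ) (x : ℂ) :
    (Mhat^[n] p).eval x = mhatFun^[n] (fun y => p.eval y) x :=
  congrFun (semiconj_eval_mhat.iterate_right n p) x

theorem stmt2 (g : Polynomial ℂ) (x t : ℂ) :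
    Summable (fun n : ℕ => ‖Polynomial.eval x (Mhat^[n] g) * t ^ n / (n.factorial : ℂ)‖) ∧
    HasSum (fun n : ℕ => Polynomial.eval x (Mhat^[n] g) * t ^ n / (n.factorial : ℂ))
      (Complex.exp (x * (Complex.exp t - 1)) * Polynomial.eval (x * Complex.exp t) g) := by
  simpa only [eval_iterate_mhat, smul_eq_mul, div_mul_eq_mul_div, mul_comm (t ^ _)]
    using stmt2_general g.differentiable x t
end

section
/- For all nonnegative integers n, m and all α, x ∈ ℂ, w_{n+m}^{(α)}(x) = Σ_{k=0}^{m} Σ_{j=0}^{n} S(m,k) · C(n,j) · C(α+k−1,k) · k! · k^{n−j} · x^k · w_j^{(α+k)}(x). -/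
open Finset

/-- Generalized binomial coefficient C(α+k−1,k) = α(α+1)⋯(α+k−1)/k!. -/
noncomputable def gbinom (α : ℂ) (k : ℕ) : ℂ :=
  Polynomial.eval α (ascPochhammer ℂ k) / (k.factorial : ℂ)

/-- The general geometric polynomials w_n^{(α)}(x). -/
noncomputable def geomPoly (α : ℂ) (n : ℕ) (x : ℂ) : ℂ :=
  ∑ k ∈ Finset.range (n + 1), (stirling2 n k : ℂ) * gbinom α k * (k.factorial : ℂ) * x ^ k

/-! By the recurrence of the Stirling numbers, the Stirling transform `∑ k, S(n, k) a_k` is the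
zeroth term of `Fⁿ a`, where `(F a)_l = l a_l + a_{l+1}`. The shift `(E_k a)_l = a_{k+l}`
satisfies `E_k F = (F + k) E_k`, so the binomial theorem expands
`(Fⁿ a)_k = ((F + k)ⁿ E_k a)_0`. Since `F^{n+m} = F^m Fⁿ`, this yields a Spivey-type addition
formula for the Stirling transform of any sequence. The geometric polynomials are the transform of
`a_k = α(α+1)⋯(α+k-1) x^k`, and `E_k` turns this sequence into `a_k` times the sequence
with `α` replaced by `α + k`. -/

section StirlingTransform

variable {M : Type*} [AddCommMonoid M]

/-- The Stirling transform `n ↦ ∑ k, S(n, k) a_k` of a sequence `a`, which for suitable `a` gives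
the geometric polynomials. It is cut off at `k = n`, beyond which `S(n, k) = 0`. -/
def stirlingTransform (a : ℕ → M) (n : ℕ) : M :=
  ∑ k ∈ range (n + 1), n.stirlingSecond k • a k

/-- The operator `(F a)_l = l a_l + a_{l+1}` on sequences, whose powers compute the Stirling
transform. It is the transpose of multiplication by `X` in the basis of falling factorials, where
`X (X)_l = l (X)_l + (X)_{l+1}`. -/
def stirlingOp : Module.End ℕ (ℕ → M) :=
  LinearMap.pi fun l ↦ l • (LinearMap.proj l : (ℕ → M) →ₗ[ℕ] M) + LinearMap.proj (l + 1)

theorem stirlingOp_apply (a : ℕ → M) (l : ℕ) : stirlingOp a l = l • a l + a (l + 1) := rfl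

theorem stirlingTransform_succ (a : ℕ → M) (n : ℕ) :
    stirlingTransform a (n + 1) = stirlingTransform (stirlingOp a) n := by
  have reindex : ∑ k ∈ range (n + 1), n.stirlingSecond (k + 1) • (k + 1) • a (k + 1) =
      ∑ k ∈ range (n + 1), n.stirlingSecond k • k • a k := by
    have h := sum_range_succ' (fun k ↦ n.stirlingSecond k • k • a k) (n + 1)
    rw [sum_range_succ, Nat.stirlingSecond_eq_zero_of_lt n.lt_succ_self] at h
    simpa only [zero_smul, smul_zero, add_zero] using h.symm
  calc stirlingTransform a (n + 1)
      = ∑ k ∈ range (n + 1), (n + 1).stirlingSecond (k + 1) • a (k + 1) := by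
        rw [stirlingTransform, sum_range_succ', Nat.stirlingSecond_succ_zero, zero_smul, add_zero]
    _ = ∑ k ∈ range (n + 1), n.stirlingSecond (k + 1) • (k + 1) • a (k + 1) +
          ∑ k ∈ range (n + 1), n.stirlingSecond k • a (k + 1) := by
        simp only [Nat.stirlingSecond_succ_succ, add_smul _ (n.stirlingSecond _),
          mul_comm (_ + 1), mul_smul, sum_add_distrib]
    _ = stirlingTransform (stirlingOp a) n := by
        simp only [reindex, stirlingTransform, stirlingOp_apply, smul_add, sum_add_distrib]

theorem stirlingTransform_eq_stirlingOp_pow (a : ℕ → M) (n : ℕ) :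
    stirlingTransform a n = (stirlingOp ^ n) a 0 := by
  induction n generalizing a with
  | zero => simp [stirlingTransform]
  | succ n ih => rw [stirlingTransform_succ, ih, pow_succ, Module.End.mul_apply]

theorem funLeft_add_comp_stirlingOp (k : ℕ) :
    LinearMap.funLeft ℕ M (k + ·) ∘ₗ stirlingOp =
      (stirlingOp + (k : Module.End ℕ (ℕ → M))) ∘ₗ LinearMap.funLeft ℕ M (k + ·) := by
  ext a l
  simp only [LinearMap.comp_apply, LinearMap.add_apply, LinearMap.funLeft_apply, stirlingOp_apply,
    Module.End.natCast_apply, Pi.add_apply, Pi.smul_apply, add_smul, add_assoc]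
  abel

theorem stirlingOp_pow_apply (a : ℕ → M) (n k : ℕ) :
    (stirlingOp ^ n) a k = ∑ j ∈ range (n + 1),
      (n.choose j * k ^ (n - j)) • stirlingTransform (fun i ↦ a (k + i)) j := by
  have intertwine : LinearMap.funLeft ℕ M (k + ·) ((stirlingOp ^ n) a) =
      ((stirlingOp + (k : Module.End ℕ (ℕ → M))) ^ n :) (fun i ↦ a (k + i)) :=
    (LinearMap.congr_fun
      (Module.End.commute_pow_left_of_commute (funLeft_add_comp_stirlingOp k).symm n) a).symm
  calc (stirlingOp ^ n) a k
      = ((stirlingOp + (k : Module.End ℕ (ℕ → M))) ^ n :) (fun i ↦ a (k + i)) 0 :=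
        congrFun intertwine 0
    _ = _ := by
        rw [(Nat.cast_commute k stirlingOp).symm.add_pow, LinearMap.sum_apply, Finset.sum_apply]
        refine sum_congr rfl fun j _ ↦ ?_
        rw [stirlingTransform_eq_stirlingOp_pow, mul_assoc, ← Nat.cast_pow, ← Nat.cast_mul,
          Module.End.mul_apply, Module.End.natCast_apply, map_nsmul, Pi.smul_apply, mul_comm]

theorem stirlingTransform_add (a : ℕ → M) (n m : ℕ) :
    stirlingTransform a (n + m) = ∑ k ∈ range (m + 1), ∑ j ∈ range (n + 1),
      (m.stirlingSecond k * (n.choose j * k ^ (n - j))) •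
        stirlingTransform (fun i ↦ a (k + i)) j := by
  have split : stirlingTransform a (n + m) = stirlingTransform ((stirlingOp ^ n) a) m := by
    rw [stirlingTransform_eq_stirlingOp_pow, stirlingTransform_eq_stirlingOp_pow, add_comm n m,
      pow_add, Module.End.mul_apply]
  rw [split, stirlingTransform]
  simp only [stirlingOp_pow_apply, smul_sum, mul_smul]

end StirlingTransform

theorem stirlingTransform_const_mul {R : Type*} [NonUnitalNonAssocSemiring R] (c : R) (a : ℕ → R)
    (n : ℕ) : stirlingTransform (fun k ↦ c * a k) n = c * stirlingTransform a n := by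
  simp only [stirlingTransform, mul_sum, mul_smul_comm]

section GeomCoeff

variable {R : Type*} [CommSemiring R]

/-- The coefficient sequence `k ↦ α(α+1)⋯(α+k-1) x^k`, whose Stirling transform is the sequence of
general geometric polynomials of order `α`, here over any commutative semiring. -/
noncomputable def geomCoeff (α x : R) (k : ℕ) : R :=
  (ascPochhammer R k).eval α * x ^ k

theorem geomCoeff_add (α x : R) (k i : ℕ) :
    geomCoeff α x (k + i) = geomCoeff α x k * geomCoeff (α + k) x i := by
  simp only [geomCoeff, ← ascPochhammer_mul, Polynomial.eval_mul, Polynomial.eval_comp,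
    Polynomial.eval_add, Polynomial.eval_X, Polynomial.eval_natCast, pow_add]
  ring

theorem stmt9_general (n m : ℕ) (α x : R) :
    stirlingTransform (geomCoeff α x) (n + m) =
      ∑ k ∈ range (m + 1), ∑ j ∈ range (n + 1),
        (m.stirlingSecond k : R) * n.choose j * geomCoeff α x k * (k : R) ^ (n - j) *
          stirlingTransform (geomCoeff (α + k) x) j := by
  rw [stirlingTransform_add]
  refine sum_congr rfl fun k _ ↦ sum_congr rfl fun j _ ↦ ?_
  simp only [geomCoeff_add, stirlingTransform_const_mul, nsmul_eq_mul]
  push_cast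
  ring

end GeomCoeff

theorem stirling2_eq_stirlingSecond_s9 : stirling2 = Nat.stirlingSecond := by
  ext n k
  induction n generalizing k with
  | zero => cases k <;> rfl
  | succ n ih =>
    cases k with
    | zero => rfl
    | succ k => rw [stirling2, Nat.stirlingSecond_succ_succ, ih, ih]

theorem geomCoeff_eq_gbinom_mul (α x : ℂ) (k : ℕ) :
    geomCoeff α x k = gbinom α k * k.factorial * x ^ k := by
  rw [geomCoeff, gbinom, div_mul_cancel₀ _ (Nat.cast_ne_zero.mpr k.factorial_ne_zero)]

theorem geomPoly_eq_stirlingTransform (α x : ℂ) (n : ℕ) :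
    geomPoly α n x = stirlingTransform (geomCoeff α x) n := by
  simp only [geomPoly, stirlingTransform, stirling2_eq_stirlingSecond_s9, geomCoeff_eq_gbinom_mul,
    nsmul_eq_mul, mul_assoc]

theorem stmt9 (n m : ℕ) (α x : ℂ) :
    geomPoly α (n + m) x =
      ∑ k ∈ range (m + 1), ∑ j ∈ range (n + 1),
        (stirling2 m k : ℂ) * (n.choose j : ℂ) * gbinom α k * (k.factorial : ℂ) *
          (k : ℂ) ^ (n - j) * x ^ k * geomPoly (α + k) j x := by
  simp only [geomPoly_eq_stirlingTransform, stmt9_general, stirling2_eq_stirlingSecond_s9,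
    geomCoeff_eq_gbinom_mul]
  exact sum_congr rfl fun k _ ↦ sum_congr rfl fun j _ ↦ by ring
end
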